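/- The sequence of intersected sets (D̃_n^a)_{n∈ℕ}, where D̃_n^a = ⋂_{m ≤ n} D_m^a and D_m^a = {θ ∈ Θ : R_{α,β,m}(θ) ≤ 1/a}, is a valid confidence sequence: Pr_{θ*}(∀ n ∈ ℕ : θ* ∈ D̃_n^a) ≥ 1 − a for every a ∈ (0,1). -/

import Mathlib

open MeasureTheory ENNReal
open scoped BigOperators Classical

noncomputable section

/-- Division in `ℝ≥0∞` with the convention that the ratio is `0` when the
denominator is `0`. -/
def safeDiv (a b : ℝ≥0∞) : ℝ≥0∞ := if b = 0 then 0 else a / b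

variable {d : ℕ} {π : Fin d → Type*} [∀ i, MeasurableSpace (π i)]

/-- The marginal density on the coordinates in `S`, obtained by integrating a density
out over the coordinates in `[d] \ S` (as a function of the full vector, depending only
on the coordinates in `S`). -/
def marginal (μ : ∀ i, Measure (π i)) (S : Finset (Fin d))
    (f : (∀ i, π i) → ℝ≥0∞) : (∀ i, π i) → ℝ≥0∞ :=
  MeasureTheory.lmarginal μ Sᶜ f

/-- The conditional density of the coordinates in `T1` given the coordinates in `T2`,
with the convention that the ratio is `0` when the denominator is `0`. -/
def condDens (μ : ∀ i, Measure (π i)) (T1 T2 : Finset (Fin d))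
    (f : (∀ i, π i) → ℝ≥0∞) (x : ∀ i, π i) : ℝ≥0∞ :=
  safeDiv (marginal μ (T1 ∪ T2) f x) (marginal μ T2 f x)

/-- `𝕊_d`: the nonempty subsets of `[d]`. -/
abbrev Sd (d : ℕ) := {S : Finset (Fin d) // S.Nonempty}

/-- `𝕋_d`: ordered pairs of disjoint nonempty subsets of `[d]`. -/
abbrev Td (d : ℕ) := {T : Finset (Fin d) × Finset (Fin d) //
  T.1.Nonempty ∧ T.2.Nonempty ∧ Disjoint T.1 T.2}

/-- The individual composite likelihood
`p_{α,β}(x;θ) = ∏_S p_S(x_S;θ)^(α_S/γ) ∏_T p(x_{T←}|x_{T→};θ)^(β_T/γ)`,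
where `f = p(·;θ)` is the joint density. -/
def compLik (μ : ∀ i, Measure (π i)) (α : Sd d → ℝ) (β : Td d → ℝ) (γ : ℝ)
    (f : (∀ i, π i) → ℝ≥0∞) (x : ∀ i, π i) : ℝ≥0∞ :=
  (∏ S : Sd d, marginal μ S.1 f x ^ (α S / γ)) *
  (∏ T : Td d, condDens μ T.1.1 T.1.2 f x ^ (β T / γ))


/-!
Let `r = p(·; θ*)` and let `B ⊆ U` be sets of coordinates. Integrating first over the coordinates
outside `U` and then over those outside `B` shows that, under `r`, the ratio of the conditional
densities `q_U / q_B` and `r_U / r_B` has expectation at most `1`. A marginal density is the case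
`B = ∅`, and the exponents `α_S / γ`, `β_T / γ` sum to `1`, so by Hölder's inequality the ratio of
composite likelihoods also has expectation at most `1`. As `θ̃_{i-1}` depends only on the past of
`X_i`, the running ratio at `θ*` is therefore a nonnegative supermartingale started at `1`, and
Ville's inequality bounds the probability that it ever exceeds `1 / a`.
-/

section SafeDiv

theorem mul_safeDiv_le (a b : ℝ≥0∞) : b * safeDiv a b ≤ a := by
  unfold safeDiv
  split_ifs
  · simp only [mul_zero, zero_le]
  · exact ENNReal.mul_div_le

theorem mul_safeDiv_safeDiv_le (a b u v : ℝ≥0∞) :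
    u * safeDiv (safeDiv a b) (safeDiv u v) ≤ a * safeDiv v b := by
  by_cases hb : b = 0
  · simp [safeDiv, hb]
  by_cases hv : v = 0
  · simp [safeDiv, hv]
  by_cases huv : u / v = 0
  · simp [safeDiv, hv, huv]
  have hv_top : v ≠ ∞ := fun h => huv (ENNReal.div_eq_zero_iff.2 (.inr h))
  simp only [safeDiv, hb, hv, huv, if_false]
  calc u * (a / b / (u / v))
      = u * (a / b * (v / u)) := by
        rw [div_eq_mul_inv (a / b), ENNReal.inv_div (.inl hv_top) (.inl hv)]
    _ = u / u * (a * (v / b)) := by simp only [div_eq_mul_inv]; ring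
    _ ≤ a * (v / b) := mul_le_of_le_one_left zero_le ENNReal.div_self_le_one

theorem safeDiv_rpow (a b : ℝ≥0∞) {w : ℝ} (hw : 0 ≤ w) :
    safeDiv (a ^ w) (b ^ w) = safeDiv a b ^ w := by
  obtain rfl | hw_pos := hw.eq_or_lt
  · simp [safeDiv]
  by_cases hb : b = 0
  · simp [safeDiv, hb, hw_pos]
  · have hbw : b ^ w ≠ 0 := by simpa [hw_pos, hw_pos.not_gt] using hb
    simp only [safeDiv, hbw, hb, if_false, ENNReal.div_rpow_of_nonneg _ _ hw]

theorem safeDiv_prod {ι : Type*} (s : Finset ι) (f g : ι → ℝ≥0∞) :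
    safeDiv (∏ i ∈ s, f i) (∏ i ∈ s, g i) = ∏ i ∈ s, safeDiv (f i) (g i) := by
  by_cases h : ∏ i ∈ s, g i = 0
  · obtain ⟨i, hi, hgi⟩ := Finset.prod_eq_zero_iff.1 h
    rw [safeDiv, if_pos h, Finset.prod_eq_zero hi (by rw [safeDiv, if_pos hgi])]
  · have hg : ∀ i ∈ s, g i ≠ 0 := Finset.prod_ne_zero_iff.1 h
    rw [safeDiv, if_neg h, ← ENNReal.prod_div_distrib fun i hi _ _ _ => .inl (hg i hi)]
    exact Finset.prod_congr rfl fun i hi => by rw [safeDiv, if_neg (hg i hi)]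

theorem measurable_safeDiv {E : Type*} [MeasurableSpace E] {f g : E → ℝ≥0∞}
    (hf : Measurable f) (hg : Measurable g) : Measurable fun x => safeDiv (f x) (g x) :=
  Measurable.ite (hg (measurableSet_singleton 0)) measurable_const (hf.div hg)

theorem lintegral_safeDiv_prod_rpow_le_one {ι E : Type*} [Fintype ι] [MeasurableSpace E]
    {ν : Measure E} {f g : ι → E → ℝ≥0∞} (hf : ∀ i, Measurable (f i))
    (hg : ∀ i, Measurable (g i)) {w : ι → ℝ} (hw_nonneg : ∀ i, 0 ≤ w i) (hw_sum : ∑ i, w i = 1)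
    (hfg : ∀ i, ∫⁻ x, safeDiv (f i x) (g i x) ∂ν ≤ 1) :
    ∫⁻ x, safeDiv (∏ i, f i x ^ w i) (∏ i, g i x ^ w i) ∂ν ≤ 1 :=
  calc ∫⁻ x, safeDiv (∏ i, f i x ^ w i) (∏ i, g i x ^ w i) ∂ν
      = ∫⁻ x, ∏ i, safeDiv (f i x) (g i x) ^ w i ∂ν := by
        simp only [safeDiv_prod, safeDiv_rpow _ _ (hw_nonneg _)]
    _ ≤ ∏ i, (∫⁻ x, safeDiv (f i x) (g i x) ∂ν) ^ w i :=
        ENNReal.lintegral_prod_norm_pow_le _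
          (fun i _ => (measurable_safeDiv (hf i) (hg i)).aemeasurable) hw_sum
          fun i _ => hw_nonneg i
    _ ≤ 1 := Finset.prod_le_one' fun i _ => ENNReal.rpow_le_one (hfg i) (hw_nonneg i)

end SafeDiv

section Marginal

theorem lmarginal_mul_of_dependsOn {δ : Type*} [DecidableEq δ] {E : δ → Type*}
    [∀ i, MeasurableSpace (E i)] (μ : ∀ i, Measure (E i)) (s : Finset δ)
    {f g : (∀ i, E i) → ℝ≥0∞} (hf : Measurable f) (hg : DependsOn g (s : Set δ)ᶜ) :
    lmarginal μ s (fun x => f x * g x) = fun x => lmarginal μ s f x * g x := by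
  ext x
  have hg_update : ∀ y, g (Function.updateFinset x s y) = g x := fun y =>
    hg fun i hi => by
      rw [Function.updateFinset, dif_neg (Finset.mem_coe.not.1 hi)]
  simp only [lmarginal, hg_update]
  exact lintegral_mul_const _ (hf.comp measurable_updateFinset)

theorem dependsOn_marginal (μ : ∀ i, Measure (π i)) (S : Finset (Fin d))
    (f : (∀ i, π i) → ℝ≥0∞) : DependsOn (marginal μ S f) S :=
  fun _ _ hxy => lmarginal_congr μ f fun i hi => hxy i (by simpa using hi)

theorem condDens_empty_right (μ : ∀ i, Measure (π i)) [∀ i, SigmaFinite (μ i)]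
    (S : Finset (Fin d)) {f : (∀ i, π i) → ℝ≥0∞} (hf : ∫⁻ x, f x ∂Measure.pi μ = 1)
    (x : ∀ i, π i) : condDens μ S ∅ f x = marginal μ S f x := by
  simp [condDens, marginal, safeDiv, hf]

theorem dependsOn_condDens (μ : ∀ i, Measure (π i)) (T₁ T₂ : Finset (Fin d))
    (f : (∀ i, π i) → ℝ≥0∞) : DependsOn (condDens μ T₁ T₂ f) (T₁ ∪ T₂ : Finset (Fin d)) := by
  intro x y hxy
  rw [condDens, condDens, dependsOn_marginal μ _ f hxy,
    dependsOn_marginal μ T₂ f fun i hi => hxy i (Finset.mem_union_right _ hi)]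

variable (μ : ∀ i, Measure (π i)) [∀ i, SigmaFinite (μ i)]

theorem measurable_condDens (T₁ T₂ : Finset (Fin d)) {f : (∀ i, π i) → ℝ≥0∞}
    (hf : Measurable f) : Measurable (condDens μ T₁ T₂ f) :=
  measurable_safeDiv (hf.lmarginal μ) (hf.lmarginal μ)

theorem lintegral_mul_le_of_marginal_mul_le (S : Finset (Fin d))
    {f g h k : (∀ i, π i) → ℝ≥0∞} (hf : Measurable f) (hg : Measurable g) (hh : Measurable h)
    (hk : Measurable k) (hgS : DependsOn g S) (hkS : DependsOn k S)
    (hle : ∀ x, marginal μ S f x * g x ≤ marginal μ S h x * k x) :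
    ∫⁻ x, f x * g x ∂Measure.pi μ ≤ ∫⁻ x, h x * k x ∂Measure.pi μ := by
  have hS : ((Sᶜ : Finset (Fin d)) : Set (Fin d))ᶜ = S := by simp
  refine lintegral_le_of_lmarginal_le Sᶜ (hf.mul hg) (hh.mul hk) ?_
  rw [lmarginal_mul_of_dependsOn μ Sᶜ hf (hS ▸ hgS), lmarginal_mul_of_dependsOn μ Sᶜ hh (hS ▸ hkS)]
  exact hle

theorem lintegral_safeDiv_condDens_le (T₁ T₂ : Finset (Fin d)) {q r : (∀ i, π i) → ℝ≥0∞}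
    (hq : Measurable q) (hr : Measurable r) :
    ∫⁻ x, safeDiv (condDens μ T₁ T₂ q x) (condDens μ T₁ T₂ r x) ∂(Measure.pi μ).withDensity r
      ≤ ∫⁻ x, r x ∂Measure.pi μ := by
  let ratio := fun x => safeDiv (condDens μ T₁ T₂ q x) (condDens μ T₁ T₂ r x)
  let ratio₂ := fun x => safeDiv (marginal μ T₂ r x) (marginal μ T₂ q x)
  have hratio : Measurable ratio :=
    measurable_safeDiv (measurable_condDens μ T₁ T₂ hq) (measurable_condDens μ T₁ T₂ hr)
  have hratio₂ : Measurable ratio₂ := measurable_safeDiv (hr.lmarginal μ) (hq.lmarginal μ)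
  have hratio_dep : DependsOn ratio (T₁ ∪ T₂ : Finset (Fin d)) := fun x y hxy => by
    simp only [ratio, dependsOn_condDens μ T₁ T₂ _ hxy]
  have hratio₂_dep : DependsOn ratio₂ T₂ := fun x y hxy => by
    simp only [ratio₂, dependsOn_marginal μ T₂ _ hxy]
  calc ∫⁻ x, ratio x ∂(Measure.pi μ).withDensity r
      = ∫⁻ x, r x * ratio x ∂Measure.pi μ := lintegral_withDensity_eq_lintegral_mul _ hr hratio
    _ ≤ ∫⁻ x, q x * ratio₂ x ∂Measure.pi μ :=
        lintegral_mul_le_of_marginal_mul_le μ (T₁ ∪ T₂) hr hratio hq hratio₂ hratio_dep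
          (hratio₂_dep.mono (Finset.coe_subset.2 Finset.subset_union_right))
          fun x => mul_safeDiv_safeDiv_le _ _ _ _
    _ ≤ ∫⁻ x, r x * 1 ∂Measure.pi μ :=
        lintegral_mul_le_of_marginal_mul_le μ T₂ hq hratio₂ hr measurable_const hratio₂_dep
          (fun _ _ _ => rfl) fun x => by simpa only [mul_one] using mul_safeDiv_le _ _
    _ = ∫⁻ x, r x ∂Measure.pi μ := by simp only [mul_one]

end Marginal

section CompositeLikelihood

/-- The pairs `(T←, T→)` of the conditional densities in the composite likelihood. A marginal
density `p_S` is encoded as the conditional density of `S` given `∅`. -/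
def compLikBlock : Sd d ⊕ Td d → Finset (Fin d) × Finset (Fin d) :=
  Sum.elim (fun S => (S.1, ∅)) fun T => T.1

/-- The exponents `α_S / γ` and `β_T / γ` of the factors of the composite likelihood. -/
def compLikWeight (α : Sd d → ℝ) (β : Td d → ℝ) (γ : ℝ) : Sd d ⊕ Td d → ℝ :=
  Sum.elim (fun S => α S / γ) fun T => β T / γ

theorem compLikWeight_nonneg {α : Sd d → ℝ} {β : Td d → ℝ} {γ : ℝ} (hα : ∀ S, 0 ≤ α S)
    (hβ : ∀ T, 0 ≤ β T) (hγ : 0 ≤ γ) (i : Sd d ⊕ Td d) : 0 ≤ compLikWeight α β γ i := by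
  rcases i with S | T
  · exact div_nonneg (hα S) hγ
  · exact div_nonneg (hβ T) hγ

theorem sum_compLikWeight {α : Sd d → ℝ} {β : Td d → ℝ} {γ : ℝ} (hγ : γ = ∑ S, α S + ∑ T, β T)
    (hγ_ne : γ ≠ 0) : ∑ i, compLikWeight α β γ i = 1 := by
  simp only [compLikWeight, Fintype.sum_sum_type, Sum.elim_inl, Sum.elim_inr, ← Finset.sum_div]
  rw [← add_div, ← hγ, div_self hγ_ne]

variable (μ : ∀ i, Measure (π i)) [∀ i, SigmaFinite (μ i)]

theorem compLik_eq_prod_condDens (α : Sd d → ℝ) (β : Td d → ℝ) (γ : ℝ)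
    {f : (∀ i, π i) → ℝ≥0∞} (hf : ∫⁻ x, f x ∂Measure.pi μ = 1) (x : ∀ i, π i) :
    compLik μ α β γ f x =
      ∏ i, condDens μ (compLikBlock i).1 (compLikBlock i).2 f x ^ compLikWeight α β γ i := by
  simp only [compLik, compLikBlock, compLikWeight, Fintype.prod_sum_type, Sum.elim_inl,
    Sum.elim_inr, condDens_empty_right μ _ hf]

theorem lintegral_safeDiv_compLik_le_one {α : Sd d → ℝ} {β : Td d → ℝ} {γ : ℝ}
    (hα : ∀ S, 0 ≤ α S) (hβ : ∀ T, 0 ≤ β T) (hγ : γ = ∑ S, α S + ∑ T, β T) (hγ_pos : 0 < γ)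
    {q r : (∀ i, π i) → ℝ≥0∞} (hq : Measurable q) (hr : Measurable r)
    (hq_one : ∫⁻ x, q x ∂Measure.pi μ = 1) (hr_one : ∫⁻ x, r x ∂Measure.pi μ = 1) :
    ∫⁻ x, safeDiv (compLik μ α β γ q x) (compLik μ α β γ r x) ∂(Measure.pi μ).withDensity r
      ≤ 1 := by
  simp only [compLik_eq_prod_condDens μ α β γ hq_one, compLik_eq_prod_condDens μ α β γ hr_one]
  exact lintegral_safeDiv_prod_rpow_le_one (fun _ => measurable_condDens μ _ _ hq)
    (fun _ => measurable_condDens μ _ _ hr) (compLikWeight_nonneg hα hβ hγ_pos.le)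
    (sum_compLikWeight hγ hγ_pos.ne')
    fun _ => (lintegral_safeDiv_condDens_le μ _ _ hq hr).trans hr_one.le

theorem measurable_marginal_uncurry {Θ : Type*} [MeasurableSpace Θ]
    {p : Θ → (∀ i, π i) → ℝ≥0∞} (hp : Measurable (Function.uncurry p)) (S : Finset (Fin d)) :
    Measurable fun z : Θ × (∀ i, π i) => marginal μ S (p z.1) z.2 := by
  refine Measurable.lintegral_prod_right (f := fun (z : Θ × (∀ i, π i)) y =>
    p z.1 (Function.updateFinset z.2 Sᶜ y)) ?_
  exact hp.comp (measurable_fst.fst.prodMk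
    (measurable_updateFinset'.comp (measurable_fst.snd.prodMk measurable_snd)))

theorem measurable_compLik_uncurry {Θ : Type*} [MeasurableSpace Θ]
    {p : Θ → (∀ i, π i) → ℝ≥0∞} (hp : Measurable (Function.uncurry p))
    (α : Sd d → ℝ) (β : Td d → ℝ) (γ : ℝ) :
    Measurable fun z : Θ × (∀ i, π i) => compLik μ α β γ (p z.1) z.2 := by
  have hmarg := measurable_marginal_uncurry μ hp
  exact (Finset.measurable_fun_prod _ fun S _ => (hmarg S.1).pow_const _).mul
    (Finset.measurable_fun_prod _ fun T _ =>
      (measurable_safeDiv (hmarg (T.1.1 ∪ T.1.2)) (hmarg T.1.2)).pow_const _)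

end CompositeLikelihood

section Ville

variable {Ω : Type*} {m0 : MeasurableSpace Ω} {μ : Measure Ω}

/-- A nonnegative supermartingale with values in `ℝ≥0∞`, integrals being Lebesgue integrals.
Mathlib's `Supermartingale` would require real values and integrability; here the supermartingale
property is expressed through integrals over past events. -/
structure LSupermartingale (M : ℕ → Ω → ℝ≥0∞) (ℱ : Filtration ℕ m0) (μ : Measure Ω) : Prop where
  adapted : Adapted ℱ M
  setLIntegral_succ_le : ∀ n s, MeasurableSet[ℱ n] s →
    ∫⁻ ω in s, M (n + 1) ω ∂μ ≤ ∫⁻ ω in s, M n ω ∂μ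

theorem mul_measure_add_setLIntegral_lt_le {f : Ω → ℝ≥0∞} (hf : Measurable f) (c : ℝ≥0∞)
    (s : Set Ω) :
    c * μ (s ∩ {ω | c ≤ f ω}) + ∫⁻ ω in s ∩ {ω | f ω < c}, f ω ∂μ ≤ ∫⁻ ω in s, f ω ∂μ := by
  have hA : MeasurableSet {ω | c ≤ f ω} := measurableSet_le measurable_const hf
  have hcompl : s ∩ {ω | f ω < c} = s \ {ω | c ≤ f ω} := by ext; simp
  rw [hcompl, ← lintegral_inter_add_sdiff f s hA]
  gcongr
  calc c * μ (s ∩ {ω | c ≤ f ω})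
      = ∫⁻ _ in s ∩ {ω | c ≤ f ω}, c ∂μ := (setLIntegral_const _ _).symm
    _ ≤ ∫⁻ ω in s ∩ {ω | c ≤ f ω}, f ω ∂μ := setLIntegral_mono hf fun _ hω => hω.2

theorem measurableSet_forall_lt_succ {M : ℕ → Ω → ℝ≥0∞} {ℱ : Filtration ℕ m0}
    (hM : Adapted ℱ M) (c : ℝ≥0∞) (n : ℕ) :
    MeasurableSet[ℱ n] {ω | ∀ m < n + 1, M m ω < c} := by
  have hIter : {ω | ∀ m < n + 1, M m ω < c} = ⋂ m ∈ Set.Iio (n + 1), {ω | M m ω < c} := by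
    ext; simp
  rw [hIter]
  exact MeasurableSet.biInter (Set.to_countable _) fun m hm =>
    ℱ.mono (Nat.lt_succ_iff.1 hm) _ (hM m measurableSet_Iio)

namespace LSupermartingale

variable {M : ℕ → Ω → ℝ≥0∞} {ℱ : Filtration ℕ m0}

theorem mul_measure_add_setLIntegral_le (hM : LSupermartingale M ℱ μ) (c : ℝ≥0∞) (n : ℕ) :
    c * μ {ω | ∃ m < n, c ≤ M m ω} + ∫⁻ ω in {ω | ∀ m < n, M m ω < c}, M n ω ∂μ
      ≤ ∫⁻ ω, M 0 ω ∂μ := by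
  induction n with
  | zero => simp
  | succ n ih =>
    set A := {ω | ∃ m < n, c ≤ M m ω}
    set B := {ω | ∀ m < n, M m ω < c}
    have hA : {ω | ∃ m < n + 1, c ≤ M m ω} ⊆ A ∪ B ∩ {ω | c ≤ M n ω} := by
      rintro ω ⟨m, hm, hcm⟩
      by_cases hω : ω ∈ A
      · exact .inl hω
      · refine .inr ⟨fun k hk => not_le.1 fun hck => hω ⟨k, hk, hck⟩, ?_⟩
        obtain hmn | rfl := Nat.lt_succ_iff_lt_or_eq.1 hm
        · exact absurd ⟨m, hmn, hcm⟩ hω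
        · exact hcm
    have hB : {ω | ∀ m < n + 1, M m ω < c} = B ∩ {ω | M n ω < c} :=
      Set.ext fun _ => Nat.forall_lt_succ_right
    have hB_meas : MeasurableSet[ℱ n] (B ∩ {ω | M n ω < c}) :=
      hB ▸ measurableSet_forall_lt_succ hM.adapted c n
    calc c * μ {ω | ∃ m < n + 1, c ≤ M m ω}
          + ∫⁻ ω in {ω | ∀ m < n + 1, M m ω < c}, M (n + 1) ω ∂μ
        ≤ c * (μ A + μ (B ∩ {ω | c ≤ M n ω})) + ∫⁻ ω in B ∩ {ω | M n ω < c}, M n ω ∂μ := by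
          rw [hB]
          gcongr c * ?_ + ?_
          · exact (measure_mono hA).trans (measure_union_le _ _)
          · exact hM.setLIntegral_succ_le n _ hB_meas
      _ = c * μ A + (c * μ (B ∩ {ω | c ≤ M n ω}) + ∫⁻ ω in B ∩ {ω | M n ω < c}, M n ω ∂μ) := by
          rw [mul_add, add_assoc]
      _ ≤ c * μ A + ∫⁻ ω in B, M n ω ∂μ := by
          gcongr
          exact mul_measure_add_setLIntegral_lt_le ((hM.adapted n).mono (ℱ.le n) le_rfl) c B
      _ ≤ ∫⁻ ω, M 0 ω ∂μ := ih

theorem ville_inequality (hM : LSupermartingale M ℱ μ) (c : ℝ≥0∞) :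
    c * μ {ω | ∃ n, c ≤ M n ω} ≤ ∫⁻ ω, M 0 ω ∂μ := by
  have hUnion : {ω | ∃ n, c ≤ M n ω} = ⋃ n, {ω | ∃ m < n, c ≤ M m ω} := by
    ext ω
    simp only [Set.mem_iUnion]
    exact ⟨fun ⟨n, h⟩ => ⟨n + 1, n, n.lt_succ_self, h⟩, fun ⟨_, m, _, h⟩ => ⟨m, h⟩⟩
  have hmono : Monotone fun n => {ω | ∃ m < n, c ≤ M m ω} :=
    fun _ _ hab _ ⟨m, hm, h⟩ => ⟨m, hm.trans_le hab, h⟩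
  rw [hUnion, hmono.measure_iUnion, ENNReal.mul_iSup]
  exact iSup_le fun n => le_self_add.trans (hM.mul_measure_add_setLIntegral_le c n)

theorem one_sub_inv_le_measure_forall_le [IsProbabilityMeasure μ] (hM : LSupermartingale M ℱ μ)
    (hM0 : ∫⁻ ω, M 0 ω ∂μ ≤ 1) (c : ℝ≥0∞) : 1 - c⁻¹ ≤ μ {ω | ∀ n, M n ω ≤ c} := by
  have hville : μ {ω | ∃ n, c ≤ M n ω} ≤ c⁻¹ := by
    rw [ENNReal.le_inv_iff_mul_le, mul_comm]
    exact (hM.ville_inequality c).trans hM0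
  have hcover : Set.univ ⊆ {ω | ∀ n, M n ω ≤ c} ∪ {ω | ∃ n, c ≤ M n ω} := fun ω _ => by
    by_cases h : ∃ n, c ≤ M n ω
    · exact .inr h
    · exact .inl fun n => (not_le.1 fun hn => h ⟨n, hn⟩).le
  rw [tsub_le_iff_right]
  calc 1 = μ Set.univ := measure_univ.symm
    _ ≤ μ {ω | ∀ n, M n ω ≤ c} + μ {ω | ∃ n, c ≤ M n ω} :=
        (measure_mono hcover).trans (measure_union_le _ _)
    _ ≤ μ {ω | ∀ n, M n ω ≤ c} + c⁻¹ := by gcongr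

theorem prod_range {L : ℕ → Ω → ℝ≥0∞} (hL : ∀ n, Measurable[ℱ (n + 1)] (L n))
    (hstep : ∀ n (f : Ω → ℝ≥0∞), Measurable[ℱ n] f → ∫⁻ ω, f ω * L n ω ∂μ ≤ ∫⁻ ω, f ω ∂μ) :
    LSupermartingale (fun n ω => ∏ i ∈ Finset.range n, L i ω) ℱ μ := by
  have hadapted : Adapted ℱ fun n ω => ∏ i ∈ Finset.range n, L i ω := fun n =>
    Finset.measurable_fun_prod _ fun i hi =>
      (hL i).mono (ℱ.mono (Finset.mem_range.1 hi)) le_rfl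
  refine ⟨hadapted, fun n s hs => ?_⟩
  rw [← lintegral_indicator (ℱ.le _ _ hs), ← lintegral_indicator (ℱ.le _ _ hs)]
  simpa only [Finset.prod_range_succ, Set.indicator_mul_left] using
    hstep n _ ((hadapted n).indicator hs)

end LSupermartingale

end Ville

section Independence

open ProbabilityTheory

variable {Ω E Θ : Type*} {m0 : MeasurableSpace Ω} [MeasurableSpace E] [MeasurableSpace Θ]
  {P : Measure Ω}

theorem lintegral_mul_le_of_indepFun [IsFiniteMeasure P] {f : Ω → ℝ≥0∞} {θ : Ω → Θ} {Z : Ω → E}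
    (hf : Measurable f) (hθ : Measurable θ) (hZ : Measurable Z)
    (hindep : IndepFun (fun ω => (f ω, θ ω)) Z P) {g : Θ × E → ℝ≥0∞} (hg : Measurable g)
    (hg_le : ∀ t, ∫⁻ z, g (t, z) ∂P.map Z ≤ 1) :
    ∫⁻ ω, f ω * g (θ ω, Z ω) ∂P ≤ ∫⁻ ω, f ω ∂P := by
  have hY : Measurable fun ω => (f ω, θ ω) := hf.prodMk hθ
  have hK : Measurable fun x : (ℝ≥0∞ × Θ) × E => x.1.1 * g (x.1.2, x.2) :=
    measurable_fst.fst.mul (hg.comp (measurable_fst.snd.prodMk measurable_snd))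
  calc ∫⁻ ω, f ω * g (θ ω, Z ω) ∂P
      = ∫⁻ x, x.1.1 * g (x.1.2, x.2) ∂P.map fun ω => ((f ω, θ ω), Z ω) :=
        (lintegral_map hK (hY.prodMk hZ)).symm
    _ = ∫⁻ y, ∫⁻ z, y.1 * g (y.2, z) ∂P.map Z ∂P.map fun ω => (f ω, θ ω) := by
        rw [(indepFun_iff_map_prod_eq_prod_map_map hY.aemeasurable hZ.aemeasurable).1 hindep,
          lintegral_prod _ hK.aemeasurable]
    _ ≤ ∫⁻ y, y.1 ∂P.map fun ω => (f ω, θ ω) := lintegral_mono fun y => by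
        rw [lintegral_const_mul (f := fun z => g (y.2, z)) _ (hg.comp measurable_prodMk_left)]
        exact mul_le_of_le_one_right zero_le (hg_le y.2)
    _ = ∫⁻ ω, f ω ∂P := lintegral_map measurable_fst hY

variable {X : ℕ → Ω → E}

/-- The filtration whose `n`-th σ-algebra is generated by the `n` variables `X 0, …, X (n - 1)`.
In contrast to `Filtration.natural`, stage `n` does not contain `X n`. -/
def pastFiltration (X : ℕ → Ω → E) (hX : ∀ i, Measurable (X i)) : Filtration ℕ m0 where
  seq n := ⨆ i ∈ Set.Iio n, MeasurableSpace.comap (X i) inferInstance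
  mono' _ _ hmn := biSup_mono fun _ hi => lt_of_lt_of_le hi hmn
  le' _ := iSup₂_le fun i _ => (hX i).comap_le

theorem pastFiltration_eq_comap (hX : ∀ i, Measurable (X i)) (n : ℕ) :
    pastFiltration X hX n = MeasurableSpace.comap (fun ω (j : Fin n) => X j ω) inferInstance := by
  refine le_antisymm (iSup₂_le fun i hi => ?_) (Measurable.comap_le ?_)
  · exact MeasurableSpace.comap_le_comap_pi (g := fun j : Fin n => X j) ⟨i, hi⟩
  · exact @measurable_pi_lambda _ _ _ (pastFiltration X hX n) _ _ fun j =>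
      (comap_measurable (X j)).mono (le_iSup₂_of_le (j : ℕ) j.2 le_rfl) le_rfl

theorem measurable_pastFiltration_succ (hX : ∀ i, Measurable (X i)) (n : ℕ) :
    Measurable[pastFiltration X hX (n + 1)] (X n) :=
  Measurable.mono (comap_measurable (X n))
    (le_iSup₂_of_le (f := fun i (_ : i ∈ Set.Iio (n + 1)) => MeasurableSpace.comap (X i) _) n
      n.lt_succ_self le_rfl) le_rfl

theorem indep_pastFiltration_comap (hX : ∀ i, Measurable (X i)) (hindep : iIndepFun X P) (n : ℕ) :
    Indep (pastFiltration X hX n) (MeasurableSpace.comap (X n) inferInstance) P := by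
  have h := indep_iSup_of_disjoint (fun i => (hX i).comap_le) hindep
    (Set.disjoint_singleton_right.2 (Set.notMem_Iio.2 (le_refl n)))
  rwa [iSup_singleton] at h

theorem lsupermartingale_prod_of_iIndepFun (hX : ∀ i, Measurable (X i))
    (hindep : iIndepFun X P) {θ : ℕ → Ω → Θ} (hθ : ∀ n, Measurable[pastFiltration X hX n] (θ n))
    {g : Θ × E → ℝ≥0∞} (hg : Measurable g) (hg_le : ∀ n t, ∫⁻ x, g (t, x) ∂P.map (X n) ≤ 1) :
    LSupermartingale (fun n ω => ∏ i ∈ Finset.range n, g (θ i ω, X i ω))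
      (pastFiltration X hX) P := by
  have : IsProbabilityMeasure P := hindep.isProbabilityMeasure
  set ℱ := pastFiltration X hX
  refine LSupermartingale.prod_range (fun n => ?_) fun n f hf => ?_
  · exact hg.comp (((hθ n).mono (ℱ.mono n.le_succ) le_rfl).prodMk
      (measurable_pastFiltration_succ hX n))
  · have hpair : IndepFun (fun ω => (f ω, θ n ω)) (X n) P :=
      (IndepFun_iff_Indep _ _ _).2 <|
        indep_of_indep_of_le_left (indep_pastFiltration_comap hX hindep n)
          (hf.prodMk (hθ n)).comap_le
    exact lintegral_mul_le_of_indepFun (hf.mono (ℱ.le n) le_rfl) ((hθ n).mono (ℱ.le n) le_rfl)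
      (hX n) hpair hg (hg_le n)

end Independence

/-- The sequence of intersected sets `(D̃_n^a)_{n∈ℕ}`, where
`D̃_n^a = ⋂_{m ≤ n} D_m^a` and `D_m^a = {θ ∈ Θ : R_{α,β,m}(θ) ≤ 1/a}`, is a valid
confidence sequence: `Pr_{θ*}(∀ n ∈ ℕ : θ* ∈ D̃_n^a) ≥ 1 − a` for every `a ∈ (0,1)`. -/
theorem running_intersected_confidence_sequence_valid
    {d : ℕ} (hd : 1 ≤ d)
    {π : Fin d → Type*} [∀ i, MeasurableSpace (π i)]
    (μ : ∀ i, Measure (π i)) [∀ i, SigmaFinite (μ i)]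
    {Θ : Type*} [MeasurableSpace Θ]
    (p : Θ → (∀ i, π i) → ℝ≥0∞)
    (hp_meas : Measurable (Function.uncurry p))
    (hp_prob : ∀ θ : Θ, ∫⁻ x, p θ x ∂(Measure.pi μ) = 1)
    (α : Sd d → ℝ) (β : Td d → ℝ)
    (hα : ∀ S, 0 ≤ α S) (hβ : ∀ T, 0 ≤ β T)
    (γ : ℝ) (hγ : γ = ∑ S, α S + ∑ T, β T) (hγpos : 0 < γ)
    {Ω : Type*} [MeasurableSpace Ω]
    (Pr : Measure Ω) [IsProbabilityMeasure Pr]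
    (θstar : Θ)
    -- `X 0, X 1, X 2, …` is the i.i.d. sequence `X_1, X_2, …` (0-indexed),
    -- each observation having density `p(·;θ*)` with respect to `μ`
    (X : ℕ → Ω → (∀ i, π i))
    (hX : ∀ i, Measurable (X i))
    (hiid : ProbabilityTheory.iIndepFun X Pr)
    (hlaw : ∀ i, Measure.map (X i) Pr = (Measure.pi μ).withDensity (p θstar))
    -- the natural filtration `F n = σ(X_1,…,X_n)` (so `F 0` is trivial)
    (F : ℕ → MeasurableSpace Ω)
    (hF : ∀ n, F n = MeasurableSpace.comap (fun ω => fun j : Fin n => X j ω)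
      (inferInstance : MeasurableSpace (Fin n → ∀ i, π i)))
    -- non-anticipating estimators: `θtilde i` is the estimator `θ̃_i`
    -- built from `X_1,…,X_i`, i.e. measurable with respect to `F i`
    (θtilde : ℕ → Ω → Θ)
    (hθtilde : ∀ i, @Measurable Ω Θ (F i) _ (θtilde i))
    (a : ℝ) (ha0 : 0 < a) (ha1 : a < 1) :
    ENNReal.ofReal (1 - a) ≤
      Pr {ω | ∀ n : ℕ, ∀ m ≤ n, safeDiv
          (∏ i ∈ Finset.range m, compLik μ α β γ (p (θtilde i ω)) (X i ω))
          (∏ i ∈ Finset.range m, compLik μ α β γ (p θstar) (X i ω))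
        ≤ 1 / ENNReal.ofReal a} := by
  have hθ_past : ∀ i, Measurable[pastFiltration X hX i] (θtilde i) := fun i => by
    rw [pastFiltration_eq_comap, ← hF]
    exact hθtilde i
  let ratio : Θ × (∀ i, π i) → ℝ≥0∞ := fun z =>
    safeDiv (compLik μ α β γ (p z.1) z.2) (compLik μ α β γ (p θstar) z.2)
  have hcompLik := measurable_compLik_uncurry μ hp_meas α β γ
  have hratio : Measurable ratio :=
    measurable_safeDiv hcompLik (hcompLik.comp (measurable_const.prodMk measurable_snd))
  have hp : ∀ θ, Measurable (p θ) := fun θ => hp_meas.comp measurable_prodMk_left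
  have hratio_le : ∀ n t, ∫⁻ x, ratio (t, x) ∂Measure.map (X n) Pr ≤ 1 := fun n t => by
    rw [hlaw n]
    exact lintegral_safeDiv_compLik_le_one μ hα hβ hγ hγpos (q := p t) (r := p θstar)
      (hp t) (hp θstar) (hp_prob t) (hp_prob θstar)
  have hM := lsupermartingale_prod_of_iIndepFun hX hiid hθ_past hratio hratio_le
  calc ENNReal.ofReal (1 - a) = 1 - (1 / ENNReal.ofReal a)⁻¹ := by
        rw [ENNReal.ofReal_sub _ ha0.le, ENNReal.ofReal_one, one_div, inv_inv]
    _ ≤ Pr {ω | ∀ n, ∏ i ∈ Finset.range n, ratio (θtilde i ω, X i ω) ≤ 1 / ENNReal.ofReal a} :=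
        hM.one_sub_inv_le_measure_forall_le (by simp) _
    _ ≤ _ := by
        exact measure_mono fun ω hω _ m _ => (safeDiv_prod _ _ _).trans_le (hω m)
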